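/- arXiv:1908.06959 — 8 statements merged into one kernel-verified Lean document; each statement's English description precedes it below -/
import Mathlib

section
/- (Theorem 1.3(1) / Theorem 4.1(1), reformulated via matchings and minors.) Let (K, v) be a matrix-configuration with K supported on an edge set E. Let J be a subset of Fin N with |J| = k, and suppose there is no injective map f : Fin M → Fin N such that (b, f b) ∈ E for every b and the range of f is disjoint from J (i.e., the underlying bipartite graph has no almost perfect matching avoiding the white vertices in J). Then the k × k matrix whose columns are the vectors v j for j ∈ J has determinant zero. (This says that all Plücker coordinates of the point of the Grassmannian spanned by the columns of v that lie outside the positroid of the graph vanish, i.e., the boundary point lies in the positroid variety.) -/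
/-!
A vector in the row space of `K` is a linear relation among the `v w`. If the `v w` with `w ∈ J`
were independent, such a relation supported on `J` would be trivial, so deleting the columns in `J`
would keep the rows of `K` independent. Independent rows satisfy Hall's condition: any `n` of them
jointly involve at least `n` columns. The resulting matching then avoids `J`.
-/

section LinearIndependence

variable {B W κ R V : Type*}

theorem linearIndependent_row_of_rank_eq_card [Field R] [Fintype B] [Fintype W]
    {A : Matrix B W R} (hA : A.rank = Fintype.card B) : LinearIndependent R A.row := by
  rw [linearIndependent_iff_card_eq_finrank_span, Set.finrank, ← A.rank_eq_finrank_span_row, hA]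

theorem det_eq_zero_of_not_linearIndepOn_range [CommRing R] [IsDomain R] [Fintype κ]
    [DecidableEq κ] {v : W → κ → R} {e : κ → W} (he : Function.Injective e)
    (hv : ¬ LinearIndepOn R v (Set.range e)) : (Matrix.of fun i j ↦ v (e j) i).det = 0 :=
  Matrix.det_eq_zero_of_not_linearIndependent_cols (mt (linearIndepOn_range_iff he v).mpr hv)

theorem eq_zero_of_sum_smul_eq_zero_of_linearIndepOn [Ring R] [AddCommGroup V] [Module R V]
    [Fintype W] {v : W → V} {J : Set W} (hv : LinearIndepOn R v J) {r : W → R}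
    (hr : ∑ w, r w • v w = 0) (hrJ : ∀ w ∉ J, r w = 0) : r = 0 := by
  classical
  have sum_J : ∑ w : J, r w • v w = 0 := by
    rw [← hr]
    refine Fintype.sum_of_injective _ Subtype.val_injective _ _ (fun w hw ↦ ?_) fun _ ↦ rfl
    rw [hrJ w (by simpa using hw), zero_smul]
  have r_J := Fintype.linearIndependent_iff.mp hv.linearIndependent (fun w ↦ r w) sum_J
  funext w
  by_cases hw : w ∈ J
  · exact r_J ⟨w, hw⟩
  · exact hrJ w hw

theorem linearIndependent_row_submatrix_compl [Ring R] [AddCommGroup V] [Module R V] [Fintype W]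
    {A : Matrix B W R} (hA : LinearIndependent R A.row) {v : W → V}
    (hrel : ∀ b, ∑ w, A b w • v w = 0) {J : Set W} (hv : LinearIndepOn R v J) :
    LinearIndependent R (A.submatrix id ((↑) : ↥Jᶜ → W)).row := by
  have row_le_ker : Submodule.span R (Set.range A.row) ≤ (Fintype.linearCombination R v).ker := by
    rw [Submodule.span_le]
    rintro _ ⟨b, rfl⟩
    exact hrel b
  refine hA.map (f := LinearMap.funLeft R R ((↑) : ↥Jᶜ → W)) ?_
  rw [Submodule.disjoint_def]
  intro r hr hrJ
  exact eq_zero_of_sum_smul_eq_zero_of_linearIndepOn hv (row_le_ker hr)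
    fun w hw ↦ congrFun hrJ ⟨w, hw⟩

end LinearIndependence

section Matching

variable {B W R V : Type*} [Ring R] [StrongRankCondition R]

theorem card_le_card_of_linearIndependent_of_support [Fintype B] {A : Matrix B W R}
    (hA : LinearIndependent R A.row) {N : Finset W} (hN : ∀ b, ∀ w ∉ N, A b w = 0) :
    Fintype.card B ≤ N.card := by
  have restricted : LinearIndependent R (A.submatrix id ((↑) : N → W)).row := by
    refine hA.map (f := LinearMap.funLeft R R ((↑) : N → W)) ?_
    have row_le_supported : Submodule.span R (Set.range A.row) ≤ Submodule.pi (↑N)ᶜ fun _ ↦ ⊥ := by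
      rw [Submodule.span_le]
      rintro _ ⟨b, rfl⟩
      exact hN b
    rw [Submodule.disjoint_def]
    intro r hr hrN
    funext w
    by_cases hw : w ∈ N
    · exact congrFun hrN ⟨w, hw⟩
    · exact row_le_supported hr w hw
  simpa using restricted.fintype_card_le_finrank

theorem exists_injective_apply_ne_zero_of_linearIndependent_row [Finite W]
    {A : Matrix B W R} (hA : LinearIndependent R A.row) :
    ∃ f : B → W, Function.Injective f ∧ ∀ b, A b (f b) ≠ 0 := by
  classical
  have := Fintype.ofFinite W
  rw [← Fintype.all_card_le_filter_rel_iff_exists_injective (fun b w ↦ A b w ≠ 0)]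
  intro s
  have hs : LinearIndependent R (A.submatrix ((↑) : s → B) id).row :=
    hA.comp _ Subtype.val_injective
  rw [← Fintype.card_coe s]
  refine card_le_card_of_linearIndependent_of_support hs fun b w hw ↦ ?_
  by_contra hbw
  exact hw (Finset.mem_filter.mpr ⟨Finset.mem_univ w, b, b.2, hbw⟩)

theorem boundary_in_positroid_variety_general [AddCommGroup V] [Module R V] [Fintype W]
    {K : Matrix B W R} {v : W → V} (hK : LinearIndependent R K.row)
    (hrel : ∀ b, ∑ w, K b w • v w = 0) {E : Set (B × W)} (hsupp : ∀ b w, (b, w) ∉ E → K b w = 0)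
    {J : Set W} (hnomatch : ¬ ∃ f : B → W,
      Function.Injective f ∧ (∀ b, (b, f b) ∈ E) ∧ ∀ b, f b ∉ J) :
    ¬ LinearIndepOn R v J := by
  intro hv
  obtain ⟨f, f_injective, hf⟩ := exists_injective_apply_ne_zero_of_linearIndependent_row
    (linearIndependent_row_submatrix_compl hK hrel hv)
  exact hnomatch ⟨fun b ↦ f b, Subtype.val_injective.comp f_injective,
    fun b ↦ by_contra fun hb ↦ hf b (hsupp b (f b) hb), fun b ↦ (f b).2⟩

end Matching

/-- **Theorem 1.3(1) / 4.1(1).** If `(K, v)` is a matrix-configuration supported on an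
edge set `E`, and `J` is a `k`-element set of white vertices such that the bipartite
graph has no almost perfect matching avoiding `J`, then the determinant of the matrix
with columns `v j`, `j ∈ J`, vanishes. -/
theorem boundary_in_positroid_variety
    (k M : ℕ) (K : Matrix (Fin M) (Fin (M + k)) ℂ) (v : Fin (M + k) → Fin k → ℂ)
    (hrank : K.rank = M)
    (hrel : ∀ b : Fin M, ∑ w, K b w • v w = 0)
    (hspan : Submodule.span ℂ (Set.range v) = ⊤)
    (E : Set (Fin M × Fin (M + k)))
    (hsupp : ∀ b w, (b, w) ∉ E → K b w = 0)
    (J : Finset (Fin (M + k))) (hJ : J.card = k)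
    (hnomatch : ¬ ∃ f : Fin M → Fin (M + k),
      Function.Injective f ∧ (∀ b, (b, f b) ∈ E) ∧ ∀ b, f b ∉ J) :
    Matrix.det (Matrix.of fun (i j : Fin k) => v (J.orderEmbOfFin hJ j) i) = 0 :=
  det_eq_zero_of_not_linearIndepOn_range (J.orderEmbOfFin hJ).injective
    (boundary_in_positroid_variety_general
      (linearIndependent_row_of_rank_eq_card (by simpa using hrank)) hrel hsupp
      (by simpa using hnomatch))
end

section
/- (A configuration is determined by its Kasteleyn matrix; consequence of Lemma 4.3 used to establish injectivity of the charts φ_F.) Let K be a matrix over ℂ with rows indexed by Fin M and columns indexed by Fin N = Fin (M + k), of rank M. Suppose v : Fin N → ℂ^k and v' : Fin N → ℂ^k are two families of vectors such that each family spans ℂ^k and each satisfies all the row relations of K, i.e., ∑_w (K b w) • v w = 0 and ∑_w (K b w) • v' w = 0 for every row b. Then there exists a ℂ-linear automorphism f of ℂ^k with v' w = f (v w) for every w. -/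
/-!
A spanning family `v` gives a surjection `𝕜^N → V` sending the `w`-th coordinate vector to `v w`.
Its kernel contains the row space of `K`, and the rank condition forces the two to have the same
dimension. So the kernel depends only on `K`, and `v` is identified with the images of the
coordinate vectors in the quotient of `𝕜^N` by the row space of `K`.
-/

open Module

section Module

variable {R M V V' ι : Type*} [Ring R] [AddCommGroup M] [Module R M] [AddCommGroup V] [Module R V]
  [AddCommGroup V'] [Module R V']

theorem exists_linearEquiv_comp_eq_of_ker_eq {f : M →ₗ[R] V} {g : M →ₗ[R] V'}
    (hf : Function.Surjective f) (hg : Function.Surjective g)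
    (hker : LinearMap.ker f = LinearMap.ker g) :
    ∃ e : V ≃ₗ[R] V', e.toLinearMap ∘ₗ f = g := by
  refine ⟨(f.quotKerEquivOfSurjective hf).symm ≪≫ₗ Submodule.quotEquivOfEq _ _ hker ≪≫ₗ
    g.quotKerEquivOfSurjective hg, LinearMap.ext fun x ↦ ?_⟩
  simp

theorem exists_linearEquiv_apply_eq_of_ker_linearCombination_eq [Fintype ι] {v : ι → V}
    {v' : ι → V'} (hspan : Submodule.span R (Set.range v) = ⊤)
    (hspan' : Submodule.span R (Set.range v') = ⊤)
    (hker : LinearMap.ker (Fintype.linearCombination R v) =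
      LinearMap.ker (Fintype.linearCombination R v')) :
    ∃ e : V ≃ₗ[R] V', ∀ i, v' i = e (v i) := by
  classical
  rw [span_range_eq_top_iff_surjective_fintypeLinearCombination] at hspan hspan'
  obtain ⟨e, he⟩ := exists_linearEquiv_comp_eq_of_ker_eq hspan hspan' hker
  refine ⟨e, fun i ↦ ?_⟩
  simpa using (LinearMap.congr_fun he (Pi.single i 1)).symm

end Module

theorem eq_ker_of_le_of_finrank_add_finrank_eq {𝕜 E V : Type*} [DivisionRing 𝕜] [AddCommGroup E]
    [Module 𝕜 E] [FiniteDimensional 𝕜 E] [AddCommGroup V] [Module 𝕜 V] {f : E →ₗ[𝕜] V}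
    (hf : Function.Surjective f) {S : Submodule 𝕜 E} (hS : S ≤ LinearMap.ker f)
    (hdim : finrank 𝕜 S + finrank 𝕜 V = finrank 𝕜 E) :
    S = LinearMap.ker f := by
  have rank_nullity := f.finrank_range_add_finrank_ker
  rw [LinearMap.range_eq_top.mpr hf, finrank_top] at rank_nullity
  exact Submodule.eq_of_le_of_finrank_eq hS (by lia)

theorem span_row_le_ker_linearCombination {R m n V : Type*} [Semiring R] [Fintype n]
    [AddCommMonoid V] [Module R V] {K : Matrix m n R} {v : n → V}
    (hrel : ∀ b, ∑ w, K b w • v w = 0) :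
    Submodule.span R (Set.range K.row) ≤ LinearMap.ker (Fintype.linearCombination R v) :=
  Submodule.span_le.mpr (Set.range_subset_iff.mpr hrel)

section Matrix

variable {𝕜 m n V V' : Type*} [Field 𝕜] [Finite m] [Fintype n] [AddCommGroup V] [Module 𝕜 V]
  [AddCommGroup V'] [Module 𝕜 V']

theorem span_row_eq_ker_linearCombination {K : Matrix m n 𝕜} {v : n → V}
    (hrank : K.rank + finrank 𝕜 V = Fintype.card n)
    (hspan : Submodule.span 𝕜 (Set.range v) = ⊤) (hrel : ∀ b, ∑ w, K b w • v w = 0) :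
    Submodule.span 𝕜 (Set.range K.row) = LinearMap.ker (Fintype.linearCombination 𝕜 v) := by
  rw [span_range_eq_top_iff_surjective_fintypeLinearCombination] at hspan
  refine eq_ker_of_le_of_finrank_add_finrank_eq hspan (span_row_le_ker_linearCombination hrel) ?_
  rw [← K.rank_eq_finrank_span_row, hrank, finrank_fintype_fun_eq_card]

theorem configuration_determined_by_kasteleyn_matrix_general (K : Matrix m n 𝕜)
    (hrank : K.rank + finrank 𝕜 V = Fintype.card n) (hdim : finrank 𝕜 V = finrank 𝕜 V')
    (v : n → V) (v' : n → V') (hspan : Submodule.span 𝕜 (Set.range v) = ⊤)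
    (hspan' : Submodule.span 𝕜 (Set.range v') = ⊤) (hrel : ∀ b, ∑ w, K b w • v w = 0)
    (hrel' : ∀ b, ∑ w, K b w • v' w = 0) :
    ∃ f : V ≃ₗ[𝕜] V', ∀ w, v' w = f (v w) :=
  exists_linearEquiv_apply_eq_of_ker_linearCombination_eq hspan hspan' <|
    (span_row_eq_ker_linearCombination hrank hspan hrel).symm.trans
      (span_row_eq_ker_linearCombination (hdim ▸ hrank) hspan' hrel')

end Matrix

/-- A vector-relation configuration on a plabic graph is determined by its Kasteleyn
matrix: two families of spanning vectors satisfying the row relations of the same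
full-rank matrix `K` differ by a linear automorphism of `ℂ^k`. -/
theorem configuration_determined_by_kasteleyn_matrix
    (k M : ℕ) (K : Matrix (Fin M) (Fin (M + k)) ℂ)
    (hrank : K.rank = M)
    (v v' : Fin (M + k) → Fin k → ℂ)
    (hspan : Submodule.span ℂ (Set.range v) = ⊤)
    (hspan' : Submodule.span ℂ (Set.range v') = ⊤)
    (hrel : ∀ b : Fin M, ∑ w, K b w • v w = 0)
    (hrel' : ∀ b : Fin M, ∑ w, K b w • v' w = 0) :
    ∃ f : (Fin k → ℂ) ≃ₗ[ℂ] (Fin k → ℂ), ∀ w, v' w = f (v w) := by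
  exact configuration_determined_by_kasteleyn_matrix_general K (by simp [hrank]) rfl v v'
    hspan hspan' hrel hrel'
end

section
/- (Lemma 4.4.) Let (K, v) be a matrix-configuration. Then there exists a nonzero scalar λ ∈ ℂ, independent of the choice below, with the following property: for every strictly monotone map s : Fin k → Fin N, letting t : Fin M → Fin N be the strictly monotone enumeration of the complement of the range of s, one has det [v (s 0), v (s 1), …, v (s (k−1))] = (−1)^(∑_j ((s j : ℕ) − (j : ℕ))) · λ · det (K.submatrix id t), where the left-hand side is the determinant of the k × k matrix whose j-th column is v (s j), and the right-hand side minor of K uses all rows and the columns in the complement of the range of s. -/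
/-!
Let `V` be the matrix with rows `v w`, and stack a left inverse `L` of `V` on top of `K` to get a
square matrix `P`. Since `L V = 1` and `K V = 0`, Jacobi's complementary minor identity for `P`,
with its columns reordered as `s` followed by `t`, expresses the minor of `K` on `t` as
`det P_{s,t}` times the minor of `V` on `s`. Reordering the columns changes `det P` only by the sign
of the shuffle `(s, t)`, which has `s j - j` inversions at its `j`-th entry; hence `λ = (det P)⁻¹`.
-/

open Equiv Finset Matrix

theorem bijective_sumElim_of_range_eq_compl {α β γ : Type*} {f : α → γ} {g : β → γ}
    (hf : f.Injective) (hg : g.Injective) (h : Set.range g = (Set.range f)ᶜ) :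
    (Sum.elim f g).Bijective := by
  refine ⟨hf.sumElim hg fun a b hab => ?_, ?_⟩
  · have hb : g b ∈ (Set.range f)ᶜ := h ▸ Set.mem_range_self b
    exact hb ⟨a, hab⟩
  · rw [← Set.range_eq_univ, Set.Sum.elim_range, h, Set.union_compl_self]

section Shuffle

theorem card_inr_lt_inl_add {k n : ℕ} {ι : Type*} [Fintype ι] (e : Fin k ⊕ ι ≃ Fin n)
    (hs : StrictMono (e ∘ Sum.inl)) (j : Fin k) :
    #{a | e (Sum.inr a) < e (Sum.inl j)} + (j : ℕ) = e (Sum.inl j) := by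
  have hinl : #{i | e (Sum.inl i) < e (Sum.inl j)} = (j : ℕ) := by
    rw [← Fin.card_Iio j, ← filter_gt_eq_Iio]
    exact congrArg card (filter_congr fun i _ => hs.lt_iff_lt)
  rw [← Fin.card_Iio (e (Sum.inl j)), ← filter_gt_eq_Iio, card_filter _ (univ : Finset (Fin n)),
    ← e.sum_comp, Fintype.sum_sum_type, ← card_filter, ← card_filter, hinl, add_comm]

variable {k m : ℕ} (e : Fin k ⊕ Fin m ≃ Fin (k + m))

theorem sign_finSumFinEquiv_symm_trans_eq_prod (hs : StrictMono (e ∘ Sum.inl))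
    (ht : StrictMono (e ∘ Sum.inr)) :
    Perm.sign (finSumFinEquiv.symm.trans e) =
      ∏ j, ∏ a, if e (Sum.inl j) < e (Sum.inr a) then 1 else -1 := by
  have hss (i j : Fin k) (h : i < j) : e (Sum.inl i) < e (Sum.inl j) := hs h
  have htt (a b : Fin m) (h : a < b) : e (Sum.inr a) < e (Sum.inr b) := ht h
  have hst (j : Fin k) (a : Fin m) : Fin.castAdd m j < Fin.natAdd k a :=
    Fin.lt_def.2 <| j.isLt.trans_le <| Nat.le_add_right k a
  simp +contextual [Perm.sign_eq_prod_prod_Ioi, ← filter_lt_eq_Ioi, prod_filter, Fin.prod_univ_add,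
    (Fin.strictMono_castAdd m).lt_iff_lt, hss, htt, hst, (hst _ _).not_gt]

theorem sign_finSumFinEquiv_symm_trans (hs : StrictMono (e ∘ Sum.inl))
    (ht : StrictMono (e ∘ Sum.inr)) :
    Perm.sign (finSumFinEquiv.symm.trans e) =
      (-1) ^ ∑ j, ((e (Sum.inl j) : ℕ) - (j : ℕ)) := by
  rw [sign_finSumFinEquiv_symm_trans_eq_prod e hs ht, ← prod_pow_eq_pow_sum]
  refine prod_congr rfl fun j _ => ?_
  have hlt (a : Fin m) : ¬ e (Sum.inl j) < e (Sum.inr a) ↔ e (Sum.inr a) < e (Sum.inl j) := by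
    rw [not_lt, le_iff_lt_or_eq, or_iff_left (by simp)]
  rw [← card_inr_lt_inl_add e hs j, Nat.add_sub_cancel, prod_ite, prod_const_one, one_mul,
    prod_const, filter_congr fun a _ => hlt a]

end Shuffle

section OneSidedInverse

variable {R m n : Type*}

theorem exists_right_inverse_of_span_range_col_eq_top [CommSemiring R] [Finite m] [DecidableEq m]
    [Fintype n] (A : Matrix m n R)
    (hA : Submodule.span R (Set.range A.col) = ⊤) : ∃ B : Matrix n m R, A * B = 1 := by
  rw [← mulVec_surjective_iff_exists_right_inverse]
  exact LinearMap.range_eq_top.1 (A.range_mulVecLin.trans hA)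

theorem exists_left_inverse_of_span_range_row_eq_top [Semiring R] [Fintype m] [Finite n]
    [DecidableEq n] (A : Matrix m n R)
    (hA : Submodule.span R (Set.range A.row) = ⊤) : ∃ B : Matrix n m R, B * A = 1 := by
  rw [← vecMul_surjective_iff_exists_left_inverse]
  exact LinearMap.range_eq_top.1 ((range_vecMulLinear A).trans hA)

theorem span_range_col_eq_top_of_rank_eq_card [Field R] [Fintype m] [Fintype n]
    (A : Matrix m n R) (hA : A.rank = Fintype.card m) : Submodule.span R (Set.range A.col) = ⊤ :=
  Submodule.eq_top_of_finrank_eq <| by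
    rw [← rank_eq_finrank_span_cols, hA, Module.finrank_fintype_fun_eq_card]

end OneSidedInverse

section ComplementaryMinor

variable {R k m n : Type*} [Fintype k] [Fintype m] [Fintype n]

theorem mul_eq_submatrix_inl_mul_add_submatrix_inr_mul {l o : Type*}
    [NonUnitalNonAssocSemiring R] (e : k ⊕ m ≃ n) (A : Matrix l n R) (B : Matrix n o R) :
    A * B = A.submatrix id (e ∘ Sum.inl) * B.submatrix (e ∘ Sum.inl) id +
      A.submatrix id (e ∘ Sum.inr) * B.submatrix (e ∘ Sum.inr) id := by
  ext i j
  simp only [mul_apply, Matrix.add_apply, submatrix_apply, Function.comp_apply, id, ← e.sum_comp,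
    Fintype.sum_sum_type]

variable [CommRing R] [DecidableEq k] [DecidableEq m]

theorem det_fromBlocks_mul_det_of_mul_add_mul_eq {A : Matrix k k R} {B : Matrix k m R}
    {C : Matrix m k R} {D : Matrix m m R} {X : Matrix k k R} {Y : Matrix m k R}
    (hone : A * X + B * Y = 1) (hzero : C * X + D * Y = 0) :
    (fromBlocks A B C D).det * X.det = D.det := by
  have hmul : fromBlocks A B C D * fromBlocks X 0 Y 1 = fromBlocks 1 B 0 D := by
    simp [fromBlocks_multiply, hone, hzero]
  simpa using congrArg det hmul

variable {L : Matrix k n R} {K : Matrix m n R} {V : Matrix n k R}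

theorem det_fromRows_submatrix_mul_det_submatrix (e : k ⊕ m ≃ n) (hLV : L * V = 1)
    (hKV : K * V = 0) :
    ((fromRows L K).submatrix id e).det * (V.submatrix (e ∘ Sum.inl) id).det =
      (K.submatrix id (e ∘ Sum.inr)).det := by
  have hblocks : (fromRows L K).submatrix id e =
      fromBlocks (L.submatrix id (e ∘ Sum.inl)) (L.submatrix id (e ∘ Sum.inr))
        (K.submatrix id (e ∘ Sum.inl)) (K.submatrix id (e ∘ Sum.inr)) := by
    ext (i | i) (j | j) <;> rfl
  rw [hblocks]
  apply det_fromBlocks_mul_det_of_mul_add_mul_eq (Y := V.submatrix (e ∘ Sum.inr) id)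
  · rw [← mul_eq_submatrix_inl_mul_add_submatrix_inr_mul, hLV]
  · rw [← mul_eq_submatrix_inl_mul_add_submatrix_inr_mul, hKV]

theorem isUnit_det_fromRows_submatrix (e : k ⊕ m ≃ n) {B : Matrix n m R} (hLV : L * V = 1)
    (hKV : K * V = 0) (hKB : K * B = 1) : IsUnit ((fromRows L K).submatrix id e).det := by
  have hmul : (fromRows L K).submatrix id e * (fromCols V B).submatrix e id =
      fromBlocks 1 (L * B) 0 1 := by
    rw [submatrix_mul_equiv, submatrix_id_id, fromRows_mul_fromCols, hLV, hKV, hKB]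
  have hdet := congrArg det hmul
  rw [det_mul, det_fromBlocks_zero₂₁, det_one, det_one, one_mul] at hdet
  exact .of_mul_eq_one _ hdet

end ComplementaryMinor

theorem det_submatrix_id_equiv_eq_sign_mul {R m n : Type*} [CommRing R] [Fintype m] [DecidableEq m]
    [Fintype n] [DecidableEq n] (P : Matrix m n R) (e₀ e : m ≃ n) :
    (P.submatrix id e).det = Perm.sign (e₀.symm.trans e) * (P.submatrix id e₀).det := by
  have hconj : e₀.symm.trans e = (e₀.symm.trans (e.trans e₀.symm)).trans e₀ := by
    ext; simp
  rw [hconj, Perm.sign_symm_trans_trans, ← det_permute']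
  congr 1
  ext
  simp

theorem det_submatrix_id_eq_neg_one_pow_mul {R : Type*} [CommRing R] {k m n : ℕ} (h : k + m = n)
    (P : Matrix (Fin k ⊕ Fin m) (Fin n) R) (e : Fin k ⊕ Fin m ≃ Fin n)
    (hs : StrictMono (e ∘ Sum.inl)) (ht : StrictMono (e ∘ Sum.inr)) :
    (P.submatrix id e).det = (-1) ^ (∑ j, ((e (Sum.inl j) : ℕ) - (j : ℕ))) *
      (P.submatrix id (finSumFinEquiv.trans (finCongr h))).det := by
  subst h
  rw [det_submatrix_id_equiv_eq_sign_mul P finSumFinEquiv e,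
    sign_finSumFinEquiv_symm_trans e hs ht]
  simp

theorem det_eq_sign_mul_lambda_mul_minor_general {R : Type*} [CommRing R]
    (k M : ℕ) (K : Matrix (Fin M) (Fin (M + k)) R) (v : Fin (M + k) → Fin k → R)
    (hcol : Submodule.span R (Set.range K.col) = ⊤)
    (hrel : ∀ b : Fin M, ∑ w, K b w • v w = 0)
    (hspan : Submodule.span R (Set.range v) = ⊤) :
    ∃ lam : Rˣ,
      ∀ (s : Fin k → Fin (M + k)) (t : Fin M → Fin (M + k)),
        StrictMono s → StrictMono t → Set.range t = (Set.range s)ᶜ →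
        Matrix.det (Matrix.of fun (i j : Fin k) => v (s j) i) =
          (-1 : R) ^ (∑ j : Fin k, ((s j : ℕ) - (j : ℕ))) * lam *
            Matrix.det (K.submatrix id t) := by
  obtain ⟨B, hKB⟩ := exists_right_inverse_of_span_range_col_eq_top K hcol
  obtain ⟨L, hLV⟩ := exists_left_inverse_of_span_range_row_eq_top (Matrix.of v) hspan
  have hKV : K * Matrix.of v = 0 := by
    ext b i
    simpa [mul_apply] using congrFun (hrel b) i
  obtain ⟨d, hd⟩ := isUnit_det_fromRows_submatrix
    (finSumFinEquiv.trans (finCongr (add_comm k M))) hLV hKV hKB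
  refine ⟨d⁻¹, fun s t hs ht hst => ?_⟩
  let e := Equiv.ofBijective _ (bijective_sumElim_of_range_eq_compl hs.injective ht.injective hst)
  have hsign : ((fromRows L K).submatrix id e).det =
      (-1) ^ (∑ j, ((s j : ℕ) - (j : ℕ))) * d := by
    rw [hd]
    exact det_submatrix_id_eq_neg_one_pow_mul (add_comm k M) _ e hs ht
  have hminor : ((fromRows L K).submatrix id e).det * (Matrix.of fun i j => v (s j) i).det =
      (K.submatrix id t).det := by
    rw [← det_transpose (Matrix.of fun i j => v (s j) i)]
    exact det_fromRows_submatrix_mul_det_submatrix e hLV hKV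
  have hsq : ((-1 : R) ^ ∑ j, ((s j : ℕ) - (j : ℕ))) * (-1) ^ ∑ j, ((s j : ℕ) - (j : ℕ)) = 1 := by
    rw [← mul_pow, neg_one_mul, neg_neg, one_pow]
  rw [← hminor, hsign]
  calc (Matrix.of fun i j => v (s j) i).det
    _ = (((-1) ^ ∑ j, ((s j : ℕ) - (j : ℕ))) * (-1) ^ ∑ j, ((s j : ℕ) - (j : ℕ))) *
        (↑d⁻¹ * d) * (Matrix.of fun i j => v (s j) i).det := by
      rw [hsq, d.inv_mul, one_mul, one_mul]
    _ = _ := by ring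

/-- **Lemma 4.4.** For a matrix-configuration `(K, v)` there is a nonzero scalar `λ`,
independent of the choice of columns, such that for every strictly monotone
`s : Fin k → Fin N` with complementary strictly monotone enumeration `t : Fin M → Fin N`,
`det [v (s 0) ⋯ v (s (k-1))] = (-1) ^ (∑ j, (s j - j)) * λ * Δ_{W ∖ range s}(K)`. -/
theorem det_eq_sign_mul_lambda_mul_minor
    (k M : ℕ) (K : Matrix (Fin M) (Fin (M + k)) ℂ) (v : Fin (M + k) → Fin k → ℂ)
    (hrank : K.rank = M)
    (hrel : ∀ b : Fin M, ∑ w, K b w • v w = 0)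
    (hspan : Submodule.span ℂ (Set.range v) = ⊤) :
    ∃ lam : ℂ, lam ≠ 0 ∧
      ∀ (s : Fin k → Fin (M + k)) (t : Fin M → Fin (M + k)),
        StrictMono s → StrictMono t → Set.range t = (Set.range s)ᶜ →
        Matrix.det (Matrix.of fun (i j : Fin k) => v (s j) i) =
          (-1 : ℂ) ^ (∑ j : Fin k, ((s j : ℕ) - (j : ℕ))) * lam *
            Matrix.det (K.submatrix id t) := by
  obtain ⟨lam, hlam⟩ := det_eq_sign_mul_lambda_mul_minor_general k M K v
    (span_range_col_eq_top_of_rank_eq_card K (by rwa [Fintype.card_fin])) hrel hspan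
  exact ⟨lam, lam.ne_zero, hlam⟩
end

section
/- (Proposition 4.9.) Let (K, v) be a matrix-configuration with K supported on an edge set E. Let S be any subset of Fin N, and suppose there is no injective map f : Fin M → Fin N such that (b, f b) ∈ E for every b and the range of f is disjoint from S (i.e., there is no matching of the black vertices with a set of white vertices disjoint from S). Then the family of vectors v w for w ∈ S is linearly dependent over ℂ. -/
/-!
A linear combination of the relations that only involves vectors of an independent set `S` is
trivial, so the relations stay independent when they are restricted to the complement of `S`. Any
`n` independent vectors involve at least `n` coordinates, so Hall's marriage theorem assigns to
each restricted relation a coordinate of its own at which it does not vanish. Nonzero coefficients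
lie on edges, so this is a matching that avoids `S`.
-/

open Function

section Semiring

variable {R ι κ : Type*} [Semiring R]

theorem card_le_card_biUnion_support_of_linearIndependent [StrongRankCondition R]
    [DecidableEq κ] {K : ι → κ →₀ R} (hK : LinearIndependent R K) (s : Finset ι) :
    s.card ≤ (s.biUnion fun i ↦ (K i).support).card := by
  classical
  let T := s.biUnion fun i ↦ (K i).support
  let B := T.image fun w ↦ Finsupp.single w (1 : R)
  have hspan : Set.range (fun i : s ↦ K i) ⊆ Submodule.span R (B : Set (κ →₀ R)) := by
    rw [Finset.coe_image, ← Finsupp.supported_eq_span_single, Set.range_subset_iff]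
    exact fun i ↦ Finset.coe_subset.2 (Finset.subset_biUnion_of_mem (fun i ↦ (K i).support) i.2)
  have hKs : LinearIndependent R fun i : s ↦ K i := hK.comp Subtype.val Subtype.val_injective
  calc
    s.card = Fintype.card s := (Fintype.card_coe s).symm
    _ ≤ Fintype.card B := linearIndependent_le_span_aux' _ hKs (B : Set (κ →₀ R)) hspan
    _ = B.card := Fintype.card_coe B
    _ ≤ T.card := Finset.card_image_le

theorem exists_injective_forall_apply_ne_zero [StrongRankCondition R] {K : ι → κ →₀ R}
    (hK : LinearIndependent R K) : ∃ f : ι → κ, Injective f ∧ ∀ i, K i (f i) ≠ 0 := by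
  classical
  simpa using (Finset.all_card_le_biUnion_card_iff_exists_injective fun i ↦ (K i).support).1
    (card_le_card_biUnion_support_of_linearIndependent hK)

theorem ker_lsubtypeDomain_compl (S : Set κ) :
    (Finsupp.lsubtypeDomain Sᶜ : (κ →₀ R) →ₗ[R] _).ker = Finsupp.supported R R S := by
  ext x
  simp [Finsupp.mem_supported', DFunLike.ext_iff, Finsupp.lsubtypeDomain]

end Semiring

theorem linearIndependent_row_iff_rank_eq_card {F m n : Type*} [Field F] [Fintype m] [Fintype n]
    {A : Matrix m n F} : LinearIndependent F A.row ↔ A.rank = Fintype.card m := by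
  rw [linearIndependent_iff_card_eq_finrank_span, Set.finrank, ← A.rank_eq_finrank_span_row,
    eq_comm]

section Ring

variable {R ι κ V : Type*} [Ring R] [AddCommGroup V] [Module R V]
  {K : ι → κ →₀ R} {v : κ → V} {S : Set κ}

theorem linearIndependent_lsubtypeDomain_compl (hK : LinearIndependent R K)
    (hrel : ∀ i, Finsupp.linearCombination R v (K i) = 0) (hS : LinearIndepOn R v S) :
    LinearIndependent R ((Finsupp.lsubtypeDomain Sᶜ : (κ →₀ R) →ₗ[R] _) ∘ K) := by
  have hspan : Submodule.span R (Set.range K) ≤ (Finsupp.linearCombination R v).ker :=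
    Submodule.span_le.2 (Set.range_subset_iff.2 hrel)
  refine hK.map ?_
  rw [ker_lsubtypeDomain_compl]
  exact (linearIndepOn_iff_disjoint.1 hS).symm.mono_left hspan

theorem dependent_of_no_matching_avoiding_general [StrongRankCondition R]
    (hK : LinearIndependent R K) (hrel : ∀ b, Finsupp.linearCombination R v (K b) = 0)
    {E : Set (ι × κ)} (hsupp : ∀ b w, (b, w) ∉ E → K b w = 0)
    (hnomatch : ¬ ∃ f : ι → κ, Injective f ∧ (∀ b, (b, f b) ∈ E) ∧ ∀ b, f b ∉ S) :
    ¬ LinearIndepOn R v S := by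
  intro hS
  obtain ⟨f, hf, hKf⟩ :=
    exists_injective_forall_apply_ne_zero (linearIndependent_lsubtypeDomain_compl hK hrel hS)
  exact hnomatch ⟨fun b ↦ f b, Subtype.val_injective.comp hf,
    fun b ↦ by_contra fun hE ↦ hKf b (hsupp b (f b) hE), fun b ↦ (f b).2⟩

end Ring

/-- **Proposition 4.9.** Let `(K, v)` be a matrix-configuration supported on an edge set
`E`, and let `S` be a set of white vertices. If there is no matching of the black
vertices with a set of white vertices disjoint from `S`, then the vectors `v w`, `w ∈ S`,
are linearly dependent. -/
theorem dependent_of_no_matching_avoiding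
    (k M : ℕ) (K : Matrix (Fin M) (Fin (M + k)) ℂ) (v : Fin (M + k) → Fin k → ℂ)
    (hrank : K.rank = M)
    (hrel : ∀ b : Fin M, ∑ w, K b w • v w = 0)
    (hspan : Submodule.span ℂ (Set.range v) = ⊤)
    (E : Set (Fin M × Fin (M + k)))
    (hsupp : ∀ b w, (b, w) ∉ E → K b w = 0)
    (S : Set (Fin (M + k)))
    (hnomatch : ¬ ∃ f : Fin M → Fin (M + k),
      Function.Injective f ∧ (∀ b, (b, f b) ∈ E) ∧ ∀ b, f b ∉ S) :
    ¬ LinearIndependent ℂ (fun w : S => v w) := by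
  let e := (Finsupp.linearEquivFunOnFinite ℂ ℂ (Fin (M + k))).symm
  have hrows : LinearIndependent ℂ K.row :=
    linearIndependent_row_iff_rank_eq_card.2 (by rw [hrank, Fintype.card_fin])
  exact dependent_of_no_matching_avoiding_general (K := e ∘ K.row)
    (hrows.map' e.toLinearMap e.ker)
    (fun b ↦ (Finsupp.linearCombination_eq_fintype_linearCombination_apply ℂ v _).trans (hrel b))
    hsupp hnomatch
end

section
/- (Core of Proposition 2.5, describing the new point produced by urban renewal.) Let V be a vector space over ℂ, let d ≥ 3, and let u : Fin d → V be a circuit, i.e., the family u is linearly dependent but every proper subfamily is linearly independent. Let c : Fin d → ℂ be a relation with ∑_i (c i) • u i = 0 and c i ≠ 0 for all i. Then the intersection of submodules span_ℂ {u 0, u 1} ⊓ span_ℂ {u 2, u 3, …, u (d−1)} equals the one-dimensional submodule span_ℂ {(c 0) • u 0 + (c 1) • u 1}. -/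
/-! Two expressions of a vector, one over the `u i` with `i ∈ s` and one over the remaining `u i`,
differ by a linear relation among all the `u i`. The relations of a circuit are the multiples of
`c`, so the vector is a multiple of `∑ i ∈ s, c i • u i`. -/

section Relations

variable {R ι V : Type*} [Ring R] [AddCommGroup V] [Module R V] [Fintype ι]
  {u : ι → V} {c : ι → R}

theorem ker_linearCombination_eq_span_singleton {i₀ : ι} (hind : LinearIndepOn R u {i₀}ᶜ)
    (hc : ∑ i, c i • u i = 0) (hunit : IsUnit (c i₀)) :
    LinearMap.ker (Fintype.linearCombination R u) = Submodule.span R {c} := by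
  classical
  refine le_antisymm (fun g hg => ?_) ((Submodule.span_singleton_le_iff_mem _ _).2 hc)
  obtain ⟨r, hr⟩ := hunit.exists_left_inv
  obtain ⟨t, ht⟩ : ∃ t, t * c i₀ = g i₀ := ⟨g i₀ * r, by rw [mul_assoc, hr, mul_one]⟩
  have hsum : ∑ i ∈ {i₀}ᶜ, (g - t • c) i • u i = 0 := by
    have hrel : ∑ i, (g - t • c) i • u i = 0 := sub_mem hg (Submodule.smul_mem _ t hc)
    rwa [Fintype.sum_eq_add_sum_compl i₀, Pi.sub_apply, Pi.smul_apply, smul_eq_mul, ht, sub_self,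
      zero_smul, zero_add] at hrel
  have hzero : ∀ i ∈ ({i₀}ᶜ : Finset ι), (g - t • c) i = 0 :=
    linearIndepOn_finset_iff.1 (by simpa using hind) _ hsum
  refine Submodule.mem_span_singleton.2 ⟨t, funext fun i => ?_⟩
  by_cases hi : i = i₀
  · rw [hi, Pi.smul_apply, smul_eq_mul, ht]
  · exact (sub_eq_zero.1 (hzero i (by simpa using hi))).symm

theorem span_image_inf_span_image_compl_of_ker_eq [DecidableEq ι]
    (hker : LinearMap.ker (Fintype.linearCombination R u) = Submodule.span R {c})
    (s : Finset ι) :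
    Submodule.span R (u '' s) ⊓ Submodule.span R (u '' ↑sᶜ) =
      Submodule.span R {∑ i ∈ s, c i • u i} := by
  apply le_antisymm
  · rintro x ⟨hxs, hxsc⟩
    obtain ⟨a, ha⟩ := (Submodule.mem_span_image_finset_iff_exists_fun' R).1 hxs
    obtain ⟨b, hb⟩ := (Submodule.mem_span_image_finset_iff_exists_fun' R).1 hxsc
    have hrel : s.piecewise a (-b) ∈ LinearMap.ker (Fintype.linearCombination R u) := by
      rw [LinearMap.mem_ker, Fintype.linearCombination_apply]
      calc ∑ i, s.piecewise a (-b) i • u i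
          = ∑ i ∈ s, s.piecewise a (-b) i • u i + ∑ i ∈ sᶜ, s.piecewise a (-b) i • u i :=
            (Finset.sum_add_sum_compl s _).symm
        _ = ∑ i ∈ s, a i • u i + ∑ i ∈ sᶜ, (-b) i • u i := by
            congr 1 <;> refine Finset.sum_congr rfl fun i hi => ?_
            · rw [s.piecewise_eq_of_mem _ _ hi]
            · rw [s.piecewise_eq_of_notMem _ _ (Finset.mem_compl.1 hi)]
        _ = 0 := by
            simp only [Pi.neg_apply, neg_smul, Finset.sum_neg_distrib, ha, hb, add_neg_cancel]
    obtain ⟨t, ht⟩ := Submodule.mem_span_singleton.1 (hker ▸ hrel)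
    refine Submodule.mem_span_singleton.2 ⟨t, ?_⟩
    calc t • ∑ i ∈ s, c i • u i = ∑ i ∈ s, (t • c) i • u i := by
          simp only [Finset.smul_sum, Pi.smul_apply, smul_assoc]
      _ = ∑ i ∈ s, a i • u i :=
          Finset.sum_congr rfl fun i hi => by rw [ht, s.piecewise_eq_of_mem _ _ hi]
      _ = x := ha
  · have hc : ∑ i, c i • u i = 0 := hker.ge (Submodule.mem_span_singleton_self c)
    have hneg : ∑ i ∈ s, c i • u i = ∑ i ∈ sᶜ, (-c) i • u i := by
      rw [← Finset.sum_add_sum_compl s] at hc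
      simpa using eq_neg_of_add_eq_zero_left hc
    exact (Submodule.span_singleton_le_iff_mem _ _).2
      ⟨(Submodule.mem_span_image_finset_iff_exists_fun' R).2 ⟨c, rfl⟩,
        (Submodule.mem_span_image_finset_iff_exists_fun' R).2 ⟨-c, hneg.symm⟩⟩

theorem urban_renewal_intersection_point_general [DecidableEq ι] {i₀ : ι}
    (hind : LinearIndepOn R u {i₀}ᶜ) (hc : ∑ i, c i • u i = 0) (hunit : IsUnit (c i₀))
    (s : Finset ι) :
    Submodule.span R (u '' s) ⊓ Submodule.span R (u '' ↑sᶜ) =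
      Submodule.span R {∑ i ∈ s, c i • u i} :=
  span_image_inf_span_image_compl_of_ker_eq
    (ker_linearCombination_eq_span_singleton hind hc hunit) s

end Relations

theorem setOf_two_le_eq_image_compl_pair {α : Type*} {d : ℕ} (hd : 2 ≤ d) (u : Fin d → α) :
    {x | ∃ i : Fin d, 2 ≤ (i : ℕ) ∧ x = u i} =
      u '' ↑({⟨0, by omega⟩, ⟨1, by omega⟩} : Finset (Fin d))ᶜ := by
  ext x
  simp only [Set.mem_ofPred_eq, Set.mem_image, Finset.mem_coe, Finset.mem_compl, Finset.mem_insert,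
    Finset.mem_singleton, Fin.ext_iff, eq_comm (a := x)]
  exact exists_congr fun i => and_congr_left fun _ => by omega

/-- **Core of Proposition 2.5 (urban renewal).** If `u : Fin d → V` is a circuit
(`d ≥ 3`) with relation `c` having all coefficients nonzero, then
`span {u 0, u 1} ⊓ span {u 2, …, u (d-1)} = span {c 0 • u 0 + c 1 • u 1}`. -/
theorem urban_renewal_intersection_point
    {V : Type*} [AddCommGroup V] [Module ℂ V]
    (d : ℕ) (hd : 3 ≤ d) (u : Fin d → V)
    (hdep : ¬ LinearIndependent ℂ u)
    (hind : ∀ i : Fin d, LinearIndependent ℂ (fun j : {j : Fin d // j ≠ i} => u j))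
    (c : Fin d → ℂ)
    (hc : ∑ i, c i • u i = 0)
    (hcne : ∀ i, c i ≠ 0) :
    Submodule.span ℂ ({u ⟨0, by omega⟩, u ⟨1, by omega⟩} : Set V) ⊓
        Submodule.span ℂ {x : V | ∃ i : Fin d, 2 ≤ (i : ℕ) ∧ x = u i} =
      Submodule.span ℂ
        ({c ⟨0, by omega⟩ • u ⟨0, by omega⟩ + c ⟨1, by omega⟩ • u ⟨1, by omega⟩} : Set V) := by
  rw [setOf_two_le_eq_image_compl_pair (by omega) u, ← Set.image_pair, ← Finset.coe_pair,
    ← Finset.sum_pair (f := fun i => c i • u i) (by simp)]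
  exact urban_renewal_intersection_point_general (hind ⟨0, by omega⟩) hc (hcne _).isUnit _
end

section
/- (Abstract form of Proposition 5.3.) Let k ≥ 1 and let d satisfy 2 ≤ d ≤ k + 1. Let φ : Fin (k+1) → (ℂ^k →ₗ[ℂ] ℂ) be a family of k + 1 linear functionals on ℂ^k such that for every index a the subfamily (φ x) for x ≠ a is linearly independent (equivalently, any k of the k + 1 functionals are linearly independent). Let σ : Fin d → Fin (k+1) be injective, and for each i : Fin d (with i − 1 denoting the cyclic predecessor of i in Fin d) define the submodule L i = ⋂ over all a : Fin (k+1) with a ≠ σ(i−1) and a ≠ σ(i) of ker (φ a). Then: (a) each L i is one-dimensional; and (b) for any choice of nonzero vectors v i ∈ L i (i : Fin d), there exists c : Fin d → ℂ with all c i ≠ 0 and ∑_i (c i) • v i = 0, and every c' : Fin d → ℂ with ∑_i (c' i) • v i = 0 is a scalar multiple of c; in other words, the family (v i) is a circuit. -/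
/-!
The functionals form a circuit in the dual space, so `∑ a, r a • φ a = 0` for some nowhere-zero `r`.
On the line `L i` only two of them survive, and the relation forces these two, rescaled by `r`, to
take opposite values `± t i` at `v i`. Applying the functional of a strand `σ i` to `∑ i, c i • v i`
therefore leaves, up to scale, the difference of two cyclically adjacent terms `c i * t i`, so the
linear relations among the `v i` are exactly the `c` with `c i * t i` independent of `i`.
-/

open Module

section Circuit

variable {R M ι : Type*} [Ring R] [AddCommGroup M] [Module R M]

variable (R) in
/-- A family of vectors is a circuit if it is linearly dependent and becomes independent as soon as
one member is removed; independence of all smaller subfamilies then follows. -/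
def IsLinearCircuit (v : ι → M) : Prop :=
  ¬ LinearIndependent R v ∧ ∀ a, LinearIndepOn R v {a}ᶜ

theorem linearIndepOn_compl_singleton_iff [Fintype ι] {v : ι → M} {a : ι} :
    LinearIndepOn R v {a}ᶜ ↔ ∀ c : ι → R, ∑ i, c i • v i = 0 → c a = 0 → c = 0 := by
  classical
  have hcoe : (↑({a}ᶜ : Finset ι) : Set ι) = {a}ᶜ := by simp
  rw [← hcoe, linearIndepOn_finset_iff]
  constructor
  · intro h c hc ha
    rw [Fintype.sum_eq_add_sum_compl a, ha, zero_smul, zero_add] at hc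
    funext i
    by_cases hi : i = a
    · rw [hi, ha, Pi.zero_apply]
    · exact h c hc i (by simpa using hi)
  · intro h c hc i hi
    have hia : i ≠ a := by simpa using hi
    have hsum : ∑ j, Function.update c a 0 j • v j = 0 := by
      rw [Fintype.sum_eq_add_sum_compl a, Function.update_self, zero_smul, zero_add, ← hc]
      refine Finset.sum_congr rfl fun j hj => ?_
      rw [Function.update_of_ne (by simpa using hj)]
    simpa [hia] using congrFun (h _ hsum (Function.update_self a 0 c)) i

variable {K V : Type*} [DivisionRing K] [AddCommGroup V] [Module K V]

theorem IsLinearCircuit.exists_relation [Fintype ι] {v : ι → V} (hv : IsLinearCircuit K v) :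
    ∃ c : ι → K, (∀ i, c i ≠ 0) ∧ ∑ i, c i • v i = 0 ∧
      ∀ c' : ι → K, ∑ i, c' i • v i = 0 → ∃ t : K, c' = t • c := by
  have eq_zero_of_apply_eq_zero (c : ι → K) (hc : ∑ i, c i • v i = 0) (a : ι) (ha : c a = 0) :
      c = 0 :=
    linearIndepOn_compl_singleton_iff.1 (hv.2 a) c hc ha
  obtain ⟨c, hc, b, hb⟩ := Fintype.not_linearIndependent_iff.1 hv.1
  refine ⟨c, fun i hi => hb (congrFun (eq_zero_of_apply_eq_zero c hc i hi) b), hc,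
    fun c' hc' => ⟨c' b * (c b)⁻¹, sub_eq_zero.1 (eq_zero_of_apply_eq_zero _ ?_ b ?_)⟩⟩
  · simp only [Pi.sub_apply, Pi.smul_apply, smul_eq_mul, sub_smul, mul_smul,
      Finset.sum_sub_distrib, ← Finset.smul_sum, hc, hc', smul_zero, sub_zero]
  · simp [hb]

theorem isLinearCircuit_of_sum_smul_eq_zero_iff [Fintype ι] [Nonempty ι] {v : ι → V} {t : ι → K}
    (ht : ∀ i, t i ≠ 0)
    (hv : ∀ c : ι → K, ∑ i, c i • v i = 0 ↔ ∀ i j, c i * t i = c j * t j) :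
    IsLinearCircuit K v := by
  refine ⟨Fintype.not_linearIndependent_iff.2
    ⟨fun i => (t i)⁻¹, (hv _).2 fun i j => ?_, Classical.arbitrary ι, inv_ne_zero (ht _)⟩,
    fun a => linearIndepOn_compl_singleton_iff.2 fun c hc ha => funext fun i => ?_⟩
  · rw [inv_mul_cancel₀ (ht i), inv_mul_cancel₀ (ht j)]
  · have hconst : c i * t i = 0 := by rw [(hv c).1 hc i a, ha, zero_mul]
    exact (mul_eq_zero.1 hconst).resolve_right (ht i)

end Circuit

section FinrankAddOne

variable {K V ι : Type*} [DivisionRing K] [AddCommGroup V] [Module K V] [FiniteDimensional K V]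
variable [Fintype ι]

theorem isLinearCircuit_of_card_eq_finrank_add_one {v : ι → V}
    (hcard : Fintype.card ι = finrank K V + 1) (hv : ∀ a, LinearIndepOn K v {a}ᶜ) :
    IsLinearCircuit K v := by
  refine ⟨fun h => ?_, hv⟩
  have := h.fintype_card_le_finrank
  omega

theorem span_range_eq_top_of_linearIndepOn_compl_singleton {v : ι → V} {a : ι}
    (hcard : Fintype.card ι = finrank K V + 1) (hv : LinearIndepOn K v {a}ᶜ) :
    Submodule.span K (Set.range v) = ⊤ := by
  classical
  have hcard_compl : Fintype.card ({a}ᶜ : Set ι) = finrank K V := by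
    rw [Fintype.card_compl_set, hcard, Fintype.card_unique, Nat.add_sub_cancel]
  have htop := LinearIndependent.span_eq_top_of_card_eq_finrank' hv hcard_compl
  refine top_le_iff.1 (htop ▸ Submodule.span_mono ?_)
  exact Set.range_comp_subset_range _ v

end FinrankAddOne

section KerInfExcept

variable {R M ι : Type*} [CommRing R] [AddCommGroup M] [Module R M]
variable {φ : ι → Dual R M} {a b : ι} {x : M}

theorem iInf_ker_eq_bot_of_span_eq_top [Projective R M]
    (hφ : Submodule.span R (Set.range φ) = ⊤) :
    ⨅ a, LinearMap.ker (φ a) = ⊥ := by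
  rw [← Submodule.dualCoannihilator_top (R := R) (M := M), ← hφ]
  ext x
  simp [← SetLike.mem_coe (p := Submodule.dualCoannihilator _)]

theorem eq_zero_of_forall_apply_eq_zero (hker : ⨅ a, LinearMap.ker (φ a) = ⊥)
    (hx : ∀ a, φ a x = 0) : x = 0 := by
  rw [← Submodule.mem_bot R, ← hker]
  exact (Submodule.mem_iInf _).2 hx

/-- The intersection of the kernels of all members of `φ` except `φ a` and `φ b`; the line attached
to the `i`-th white neighbour is `kerInfExcept φ (σ (i - 1)) (σ i)`. -/
def kerInfExcept (φ : ι → Dual R M) (a b : ι) : Submodule R M :=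
  ⨅ (c : ι) (_ : c ≠ a ∧ c ≠ b), LinearMap.ker (φ c)

theorem mem_kerInfExcept : x ∈ kerInfExcept φ a b ↔ ∀ c, c ≠ a → c ≠ b → φ c x = 0 := by
  simp only [kerInfExcept, Submodule.mem_iInf, LinearMap.mem_ker, and_imp]

variable {r : ι → R}

theorem mul_apply_eq_neg_of_mem_kerInfExcept [Fintype ι] (hr : ∑ c, r c • φ c = 0) (hab : a ≠ b)
    (hx : x ∈ kerInfExcept φ a b) : r a * φ a x = -(r b * φ b x) := by
  rw [mem_kerInfExcept] at hx
  have hsum : ∑ c, r c * φ c x = 0 := by simpa using LinearMap.congr_fun hr x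
  rw [Fintype.sum_eq_add a b hab fun c hc => by rw [hx c hc.1 hc.2, mul_zero]] at hsum
  exact eq_neg_of_add_eq_zero_left hsum

theorem eq_zero_of_mem_kerInfExcept [NoZeroDivisors R] [Fintype ι]
    (hker : ⨅ c, LinearMap.ker (φ c) = ⊥) (hr : ∑ c, r c • φ c = 0) (ha : r a ≠ 0)
    (hab : a ≠ b) (hx : x ∈ kerInfExcept φ a b) (hb : φ b x = 0) : x = 0 := by
  have hrel := mul_apply_eq_neg_of_mem_kerInfExcept hr hab hx
  rw [hb, mul_zero, neg_zero] at hrel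
  refine eq_zero_of_forall_apply_eq_zero hker fun c => ?_
  by_cases hca : c = a
  · exact hca ▸ (mul_eq_zero.1 hrel).resolve_left ha
  by_cases hcb : c = b
  · exact hcb ▸ hb
  exact mem_kerInfExcept.1 hx c hca hcb

variable {κ : Type*} {π : Equiv.Perm κ} {σ : κ → ι} {v : κ → M}

theorem mul_apply_sum_smul_eq_sub [Fintype ι] [Fintype κ] (hr : ∑ a, r a • φ a = 0)
    (hπ : ∀ i, π i ≠ i) (hσ : Function.Injective σ)
    (hv : ∀ i, v i ∈ kerInfExcept φ (σ (π i)) (σ i)) (c : κ → R) (j : κ) :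
    r (σ (π j)) * φ (σ (π j)) (∑ i, c i • v i) =
      c (π j) * (r (σ (π j)) * φ (σ (π j)) (v (π j))) - c j * (r (σ j) * φ (σ j) (v j)) := by
  have hzero (i : κ) (hi : i ≠ π j ∧ i ≠ j) : c i * φ (σ (π j)) (v i) = 0 := by
    rw [mem_kerInfExcept.1 (hv i) _ (hσ.ne (π.injective.ne hi.2.symm)) (hσ.ne hi.1.symm), mul_zero]
  have hneg := mul_apply_eq_neg_of_mem_kerInfExcept hr (hσ.ne (hπ j)) (hv j)
  simp only [map_sum, map_smul, smul_eq_mul]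
  rw [Fintype.sum_eq_add (π j) j (hπ j) hzero]
  linear_combination c j * hneg

theorem apply_sum_smul_eq_zero_of_notMem_range [Fintype κ]
    (hv : ∀ i, v i ∈ kerInfExcept φ (σ (π i)) (σ i)) (c : κ → R)
    {a : ι} (ha : a ∉ Set.range σ) : φ a (∑ i, c i • v i) = 0 := by
  have hne (i : κ) : a ≠ σ i := fun h => ha ⟨i, h.symm⟩
  rw [map_sum]
  refine Finset.sum_eq_zero fun i _ => ?_
  rw [map_smul, mem_kerInfExcept.1 (hv i) a (hne _) (hne _), smul_zero]

theorem sum_smul_eq_zero_iff_forall_mul_eq [NoZeroDivisors R] [Fintype ι] [Fintype κ]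
    (hker : ⨅ a, LinearMap.ker (φ a) = ⊥) (hr : ∑ a, r a • φ a = 0) (hr0 : ∀ a, r a ≠ 0)
    (hπ : ∀ i, π i ≠ i) (hσ : Function.Injective σ)
    (hv : ∀ i, v i ∈ kerInfExcept φ (σ (π i)) (σ i)) (c : κ → R) :
    ∑ i, c i • v i = 0 ↔
      ∀ j, c (π j) * (r (σ (π j)) * φ (σ (π j)) (v (π j))) = c j * (r (σ j) * φ (σ j) (v j)) := by
  have heval := mul_apply_sum_smul_eq_sub hr hπ hσ hv c
  constructor
  · intro hsum j
    rw [← sub_eq_zero, ← heval j, hsum, map_zero, mul_zero]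
  · intro hstep
    refine eq_zero_of_forall_apply_eq_zero hker fun a => ?_
    by_cases ha : a ∈ Set.range σ
    · obtain ⟨i, rfl⟩ := ha
      obtain ⟨j, rfl⟩ := π.surjective i
      have hmul := heval j
      rw [hstep j, sub_self] at hmul
      exact (mul_eq_zero.1 hmul).resolve_left (hr0 _)
    · exact apply_sum_smul_eq_zero_of_notMem_range hv c ha

end KerInfExcept

section Cycle

theorem apply_eq_of_sameCycle {κ α : Type*} {π : Equiv.Perm κ} {f : κ → α}
    (hf : ∀ i, f (π i) = f i) {i j : κ} (hij : π.SameCycle i j) : f i = f j := by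
  obtain ⟨n, rfl⟩ := hij
  induction n with
  | zero => rfl
  | succ n ih => rw [ih, add_comm, zpow_one_add, Equiv.Perm.mul_apply, hf]
  | pred n ih =>
    rw [ih, sub_eq_neg_add, zpow_add, zpow_neg_one, Equiv.Perm.mul_apply, ← hf (π⁻¹ _),
      Equiv.Perm.inv_def, Equiv.apply_symm_apply]

theorem isCycleOn_univ_finRotate_symm (n : ℕ) :
    Equiv.Perm.IsCycleOn (finRotate (n + 2)).symm Set.univ := by
  have hmoved : {i | finRotate (n + 2) i ≠ i} = Set.univ := by
    rw [← Finset.coe_univ, ← support_finRotate, Equiv.Perm.coe_support_eq_set_support]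
  exact (hmoved ▸ isCycle_finRotate.isCycleOn).inv

end Cycle

section SpanningCircuit

variable {K V ι : Type*} [Field K] [AddCommGroup V] [Module K V]
variable {φ : ι → Dual K V} {a b : ι}

theorem exists_mem_kerInfExcept_apply_ne_zero [Finite ι] (hφ : LinearIndepOn K φ {a}ᶜ)
    (hab : a ≠ b) : ∃ x ∈ kerInfExcept φ a b, φ b x ≠ 0 := by
  by_contra! hzero
  have hmem : φ b ∈ Submodule.span K (Set.range fun c : {c // c ≠ a ∧ c ≠ b} => φ c) :=
    mem_span_of_iInf_ker_le_ker fun x hx => hzero x <| by simpa [mem_kerInfExcept] using hx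
  refine (linearIndepOn_iff_notMem_span.1 hφ) b hab.symm (Submodule.span_mono ?_ hmem)
  rintro _ ⟨c, rfl⟩
  exact Set.mem_image_of_mem φ c.2

theorem IsLinearCircuit.finrank_kerInfExcept_eq_one [Finite ι] (hφ : IsLinearCircuit K φ)
    (hker : ⨅ c, LinearMap.ker (φ c) = ⊥) (hab : a ≠ b) :
    finrank K (kerInfExcept φ a b) = 1 := by
  have := Fintype.ofFinite ι
  obtain ⟨r, hr0, hr, -⟩ := hφ.exists_relation
  obtain ⟨w, hw, hbw⟩ := exists_mem_kerInfExcept_apply_ne_zero (hφ.2 a) hab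
  refine finrank_eq_one_iff'.2 ⟨⟨w, hw⟩, fun h => hbw ?_, fun x => ⟨φ b x * (φ b w)⁻¹, ?_⟩⟩
  · rw [show w = 0 from congrArg Subtype.val h, map_zero]
  · refine Subtype.ext (sub_eq_zero.1 (eq_zero_of_mem_kerInfExcept hker hr (hr0 a) hab
      (Submodule.sub_mem _ (Submodule.smul_mem _ _ hw) x.2) ?_))
    simp [hbw]

theorem lines_around_black_vertex_form_circuit_general {κ : Type*} [Finite ι] [Nontrivial κ]
    {π : Equiv.Perm κ} {σ : κ → ι} (hφ : IsLinearCircuit K φ)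
    (hker : ⨅ a, LinearMap.ker (φ a) = ⊥) (hπ : π.IsCycleOn Set.univ)
    (hσ : Function.Injective σ) :
    (∀ i, finrank K (kerInfExcept φ (σ (π i)) (σ i)) = 1) ∧
      ∀ v : κ → V, (∀ i, v i ∈ kerInfExcept φ (σ (π i)) (σ i)) → (∀ i, v i ≠ 0) →
        IsLinearCircuit K v := by
  have := Fintype.ofFinite ι
  have := Fintype.ofInjective σ hσ
  have hπ_ne (i : κ) : π i ≠ i := hπ.apply_ne Set.nontrivial_univ (Set.mem_univ i)
  have hσπ_ne (i : κ) : σ (π i) ≠ σ i := hσ.ne (hπ_ne i)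
  refine ⟨fun i => hφ.finrank_kerInfExcept_eq_one hker (hσπ_ne i), fun v hv hv0 => ?_⟩
  obtain ⟨r, hr0, hr, -⟩ := hφ.exists_relation
  have ht (i : κ) : r (σ i) * φ (σ i) (v i) ≠ 0 := mul_ne_zero (hr0 _) fun h =>
    hv0 i (eq_zero_of_mem_kerInfExcept hker hr (hr0 _) (hσπ_ne i) (hv i) h)
  refine isLinearCircuit_of_sum_smul_eq_zero_iff ht fun c => ?_
  rw [sum_smul_eq_zero_iff_forall_mul_eq hker hr hr0 hπ_ne hσ hv]
  exact ⟨fun h i j => apply_eq_of_sameCycle (f := fun i => c i * (r (σ i) * φ (σ i) (v i))) h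
    (hπ.2 (Set.mem_univ i) (Set.mem_univ j)), fun h j => h (π j) j⟩

end SpanningCircuit

/-- **Abstract form of Proposition 5.3.** Given `k + 1` linear functionals on `ℂ^k` any
`k` of which are linearly independent, an injective cyclic list `σ : Fin d → Fin (k+1)`
(`2 ≤ d ≤ k + 1`), and the lines `L i = ⋂_{a ≠ σ(i-1), σ(i)} ker (φ a)`: each `L i` is
one-dimensional, and any choice of nonzero vectors `v i ∈ L i` satisfies a linear
relation with all coefficients nonzero which is unique up to scale (the `v i` form a
circuit). -/
theorem lines_around_black_vertex_form_circuit
    (k d : ℕ) (hk : 1 ≤ k) (hd2 : 2 ≤ d) (hdk : d ≤ k + 1)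
    (φ : Fin (k + 1) → ((Fin k → ℂ) →ₗ[ℂ] ℂ))
    (hφ : ∀ a : Fin (k + 1),
      LinearIndependent ℂ (fun x : {x : Fin (k + 1) // x ≠ a} => φ x))
    (σ : Fin d → Fin (k + 1)) (hσ : Function.Injective σ)
    (L : Fin d → Submodule ℂ (Fin k → ℂ))
    (hL : ∀ i : Fin d, L i =
      ⨅ (a : Fin (k + 1)) (_ : a ≠ σ (i - ⟨1, by omega⟩) ∧ a ≠ σ i), LinearMap.ker (φ a)) :
    (∀ i, Module.finrank ℂ (L i) = 1) ∧
      ∀ v : Fin d → (Fin k → ℂ), (∀ i, v i ∈ L i) → (∀ i, v i ≠ 0) →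
        ∃ c : Fin d → ℂ, (∀ i, c i ≠ 0) ∧ (∑ i, c i • v i = 0) ∧
          ∀ c' : Fin d → ℂ, (∑ i, c' i • v i = 0) → ∃ t : ℂ, c' = t • c := by
  obtain ⟨n, rfl⟩ : ∃ n, d = n + 2 := ⟨d - 2, by omega⟩
  have hcard : Fintype.card (Fin (k + 1)) = finrank ℂ (Dual ℂ (Fin k → ℂ)) + 1 := by
    simp [Subspace.dual_finrank_eq]
  have hcircuit : IsLinearCircuit ℂ φ := isLinearCircuit_of_card_eq_finrank_add_one hcard hφ
  have hker : ⨅ a, LinearMap.ker (φ a) = ⊥ := iInf_ker_eq_bot_of_span_eq_top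
    (span_range_eq_top_of_linearIndepOn_compl_singleton hcard (hφ 0))
  obtain rfl : L = fun i => kerInfExcept φ (σ ((finRotate (n + 2)).symm i)) (σ i) :=
    funext fun i => by rw [finRotate_symm_apply]; exact hL i
  obtain ⟨hfinrank, hv⟩ := lines_around_black_vertex_form_circuit_general hcircuit hker
    (isCycleOn_univ_finRotate_symm n) hσ
  exact ⟨hfinrank, fun v hmem hv0 => (hv v hmem hv0).exists_relation⟩
end

section
/- (Proposition 6.2.) Let B and W be finite types, let E' ⊆ B × W, and let ∂ ⊆ W be a set of boundary white vertices. Assume the bipartite simple graph F on B ⊕ W whose edges are the pairs {Sum.inl b, Sum.inr w} with (b, w) ∈ E' is a system: F is acyclic (a forest); every connected component of F contains exactly one vertex of the form Sum.inr w with w ∈ ∂; and every connected component of F either contains exactly one edge or has the property that every vertex Sum.inl b in it has degree 2 in F. Let K : B → W → ℂ satisfy K b w ≠ 0 for every (b, w) ∈ E'. Then there exists exactly one pair of functions λ : B → ℂˣ and μ : W → ℂˣ with μ w = 1 for every w ∈ ∂, such that (λ b) * (K b w) * (μ w) = 1 for every (b, w) ∈ E'. (Equivalently: every vector-relation configuration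 whose coefficients are nonzero on the edges of a system has a unique gauge representative, using gauge only at internal vertices, in which all coefficients on the system's edges equal 1.) -/
/-!
Replacing the column gauge `μ` by `μ⁻¹`, the condition `λ b * K b w * μ w = 1` says that `μ⁻¹` at
`w` is `λ` at `b` times `K b w`: the pair `(λ, μ⁻¹)` is a potential for the gain graph on `B ⊕ W`
whose gain is `K b w` along the edge from `b` to `w` and `(K b w)⁻¹` backwards. A potential is
determined on a component by its value at one root, through the gain of any walk from that root.
On a forest, the gain of the unique path from the root is itself a potential, because for adjacent
vertices one of the two paths extends the other by an edge.
-/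

section GainGraph

variable {V M : Type*} [Monoid M] {F : SimpleGraph V} {c : V → V → M}

/-- The gain of a walk in the graph `F` with gain function `c`: the product of the gains of its
steps, in order. -/
def walkGain (c : V → V → M) : {u v : V} → F.Walk u v → M
  | _, _, .nil => 1
  | u, _, .cons (v := v) _ p => c u v * walkGain c p

theorem walkGain_concat {u v w : V} (p : F.Walk u v) (h : F.Adj v w) :
    walkGain c (p.concat h) = walkGain c p * c v w := by
  induction p with
  | nil => exact (mul_one _).trans (one_mul _).symm
  | cons _ p ih => simp only [SimpleGraph.Walk.concat_cons, walkGain, ih, mul_assoc]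

theorem walkGain_eq_mul_of_isPath_of_adj (hF : F.IsAcyclic)
    (hc : ∀ x y, F.Adj x y → c x y * c y x = 1) {r u v : V} {p : F.Walk r u} {q : F.Walk r v}
    (hp : p.IsPath) (hq : q.IsPath) (h : F.Adj u v) :
    walkGain c q = walkGain c p * c u v := by
  by_cases hu : u ∈ q.support
  · rw [hF.path_concat hp hq h hu, walkGain_concat]
  · have hv : v ∈ p.support := hF.mem_support_of_ne_mem_support_of_adj_of_isPath hp hq h hu
    rw [hF.path_concat hq hp h.symm hv, walkGain_concat, mul_assoc, hc v u h.symm, mul_one]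

/-- A potential for the gain function `c` on `F`: along each edge its value is multiplied on the
right by the gain. -/
def IsPotential (F : SimpleGraph V) (c : V → V → M) (g : V → M) : Prop :=
  ∀ ⦃x y⦄, F.Adj x y → g y = g x * c x y

theorem IsPotential.eq_mul_walkGain {g : V → M} (hg : IsPotential F c g) {u v : V}
    (p : F.Walk u v) : g v = g u * walkGain c p := by
  induction p with
  | nil => exact (mul_one _).symm
  | cons h p ih => rw [ih, hg h, walkGain, mul_assoc]

theorem IsPotential.eq_of_reachable {g g' : V → M} (hg : IsPotential F c g)
    (hg' : IsPotential F c g') {u v : V} (h : F.Reachable u v) (hu : g u = g' u) :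
    g v = g' v := by
  obtain ⟨p⟩ := h
  rw [hg.eq_mul_walkGain p, hg'.eq_mul_walkGain p, hu]

theorem exists_isPotential_eqOn (hF : F.IsAcyclic)
    (hc : ∀ x y, F.Adj x y → c x y * c y x = 1) {S : Set V}
    (hS : ∀ v, ∃! r, r ∈ S ∧ F.Reachable r v) (f : V → M) :
    ∃ g, IsPotential F c g ∧ Set.EqOn g f S := by
  have path_value (v : V) :
      ∃ a, ∀ r ∈ S, ∀ p : F.Walk r v, p.IsPath → a = f r * walkGain c p := by
    obtain ⟨r, ⟨-, hrv⟩, hr_unique⟩ := hS v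
    obtain ⟨p, hp⟩ := hrv.exists_isPath
    refine ⟨f r * walkGain c p, fun r' hr' q hq ↦ ?_⟩
    obtain rfl : r' = r := hr_unique r' ⟨hr', q.reachable⟩
    rw [Subtype.mk.inj ((hF.subsingleton_path _ _).elim ⟨p, hp⟩ ⟨q, hq⟩)]
  choose g hg using path_value
  refine ⟨g, fun x y h ↦ ?_, fun r hr ↦ ?_⟩
  · obtain ⟨r, ⟨hr, hrx⟩, -⟩ := hS x
    obtain ⟨p, hp⟩ := hrx.exists_isPath
    obtain ⟨q, hq⟩ := (hrx.trans h.reachable).exists_isPath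
    rw [hg x r hr p hp, hg y r hr q hq, walkGain_eq_mul_of_isPath_of_adj hF hc hp hq h, mul_assoc]
  · exact (hg r r hr .nil .nil).trans (mul_one _)

theorem existsUnique_isPotential_eqOn (hF : F.IsAcyclic)
    (hc : ∀ x y, F.Adj x y → c x y * c y x = 1) {S : Set V}
    (hS : ∀ v, ∃! r, r ∈ S ∧ F.Reachable r v) (f : V → M) :
    ∃! g, IsPotential F c g ∧ Set.EqOn g f S := by
  refine existsUnique_of_exists_of_unique (exists_isPotential_eqOn hF hc hS f) ?_
  rintro g g' ⟨hg, hgf⟩ ⟨hg', hgf'⟩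
  funext v
  obtain ⟨r, ⟨hr, hrv⟩, -⟩ := hS v
  exact hg.eq_of_reachable hg' hrv ((hgf hr).trans (hgf' hr).symm)

end GainGraph

section Gauge

variable {B W G : Type*} [Group G]

/-- The gain function on `B ⊕ W` of a matrix of edge weights `k`: `k b w` from `b` to `w` and its
inverse from `w` to `b`. Pairs of vertices of the same colour are never adjacent and get `1`. -/
def bipartiteGain (k : B → W → G) : B ⊕ W → B ⊕ W → G
  | .inl b, .inr w => k b w
  | .inr w, .inl b => (k b w)⁻¹
  | _, _ => 1

theorem bipartiteGain_mul_swap (k : B → W → G) (x y : B ⊕ W) :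
    bipartiteGain k x y * bipartiteGain k y x = 1 := by
  rcases x with b | w <;> rcases y with b' | w' <;> simp [bipartiteGain]

/-- The correspondence between gauges `(λ, μ)` and functions on the vertices, with `μ` inverted so
that the gauges trivializing the edge weights become potentials. -/
def gaugeEquivPotential : (B → G) × (W → G) ≃ (B ⊕ W → G) :=
  ((Equiv.refl (B → G)).prodCongr (Equiv.inv (W → G))).trans
    (Equiv.sumArrowEquivProdArrow B W G).symm

theorem isPotential_gaugeEquivPotential_iff {E' : Set (B × W)} {F : SimpleGraph (B ⊕ W)}
    (hF : ∀ x y : B ⊕ W, F.Adj x y ↔ ∃ p ∈ E',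
      (x = Sum.inl p.1 ∧ y = Sum.inr p.2) ∨ (x = Sum.inr p.2 ∧ y = Sum.inl p.1))
    (k : B → W → G) (gauges : (B → G) × (W → G)) :
    IsPotential F (bipartiteGain k) (gaugeEquivPotential gauges) ↔
      ∀ p ∈ E', gauges.1 p.1 * k p.1 p.2 * gauges.2 p.2 = 1 := by
  constructor
  · intro hg p hp
    have hedge : (gauges.2 p.2)⁻¹ = gauges.1 p.1 * k p.1 p.2 :=
      hg ((hF _ _).2 ⟨p, hp, .inl ⟨rfl, rfl⟩⟩)
    rw [← hedge, inv_mul_cancel]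
  · intro hgauge x y hxy
    obtain ⟨p, hp, ⟨rfl, rfl⟩ | ⟨rfl, rfl⟩⟩ := (hF x y).1 hxy
    · exact (eq_inv_of_mul_eq_one_left (hgauge p hp)).symm
    · exact eq_mul_inv_of_mul_eq (eq_inv_of_mul_eq_one_left (hgauge p hp))

theorem eqOn_gaugeEquivPotential_one_iff (bd : Set W) (gauges : (B → G) × (W → G)) :
    Set.EqOn (gaugeEquivPotential gauges) 1 (Sum.inr '' bd) ↔ ∀ w ∈ bd, gauges.2 w = 1 :=
  Set.forall_mem_image.trans (forall₂_congr fun _ _ ↦ inv_eq_one)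

theorem existsUnique_gauge_of_isAcyclic {E' : Set (B × W)} {bd : Set W}
    {F : SimpleGraph (B ⊕ W)}
    (hF : ∀ x y : B ⊕ W, F.Adj x y ↔ ∃ p ∈ E',
      (x = Sum.inl p.1 ∧ y = Sum.inr p.2) ∨ (x = Sum.inr p.2 ∧ y = Sum.inl p.1))
    (hforest : F.IsAcyclic)
    (hbdry : ∀ c : F.ConnectedComponent,
      ∃! w : W, w ∈ bd ∧ F.connectedComponentMk (Sum.inr w) = c)
    (k : B → W → G) :
    ∃! gauges : (B → G) × (W → G),
      (∀ w ∈ bd, gauges.2 w = 1) ∧ ∀ p ∈ E', gauges.1 p.1 * k p.1 p.2 * gauges.2 p.2 = 1 := by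
  have hroot (v : B ⊕ W) : ∃! r, r ∈ Sum.inr '' bd ∧ F.Reachable r v := by
    obtain ⟨w, ⟨hw, hwv⟩, hw_unique⟩ := hbdry (F.connectedComponentMk v)
    refine ⟨.inr w, ⟨Set.mem_image_of_mem _ hw, SimpleGraph.ConnectedComponent.exact hwv⟩, ?_⟩
    rintro _ ⟨⟨w', hw', rfl⟩, hw'v⟩
    rw [hw_unique w' ⟨hw', SimpleGraph.ConnectedComponent.sound hw'v⟩]
  refine (gaugeEquivPotential.existsUnique_congr fun gauges ↦ ?_).2
    (existsUnique_isPotential_eqOn hforest (fun x y _ ↦ bipartiteGain_mul_swap k x y) hroot 1)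
  rw [isPotential_gaugeEquivPotential_iff hF, eqOn_gaugeEquivPotential_one_iff, and_comm]

end Gauge

theorem unique_gauge_on_system_general
    {B W G₀ : Type*} [GroupWithZero G₀]
    (E' : Set (B × W)) (bd : Set W)
    (F : SimpleGraph (B ⊕ W))
    (hF : ∀ x y : B ⊕ W, F.Adj x y ↔ ∃ p ∈ E',
      (x = Sum.inl p.1 ∧ y = Sum.inr p.2) ∨ (x = Sum.inr p.2 ∧ y = Sum.inl p.1))
    (hforest : F.IsAcyclic)
    (hbdry : ∀ c : F.ConnectedComponent,
      ∃! w : W, w ∈ bd ∧ F.connectedComponentMk (Sum.inr w) = c)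
    (K : B → W → G₀)
    (hK : ∀ p ∈ E', K p.1 p.2 ≠ 0) :
    ∃! gauges : (B → G₀ˣ) × (W → G₀ˣ),
      (∀ w ∈ bd, gauges.2 w = 1) ∧
      ∀ p ∈ E', (gauges.1 p.1 : G₀) * K p.1 p.2 * (gauges.2 p.2 : G₀) = 1 := by
  have unit_weight (b : B) (w : W) : ∃ a : G₀ˣ, (b, w) ∈ E' → (a : G₀) = K b w := by
    by_cases h : (b, w) ∈ E'
    · exact ⟨.mk0 (K b w) (hK _ h), fun _ ↦ rfl⟩
    · exact ⟨1, fun h' ↦ absurd h' h⟩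
  choose k hk using unit_weight
  refine (existsUnique_congr fun gauges ↦ and_congr_right fun _ ↦
    forall₂_congr fun p hp ↦ ?_).1 (existsUnique_gauge_of_isAcyclic hF hforest hbdry k)
  rw [← hk p.1 p.2 hp]
  norm_cast

/-- **Proposition 6.2.** Let `F` be a system in a plabic graph (a forest whose
components each contain exactly one boundary white vertex and are either single edges
or have all black vertices of degree `2`), with edge set `E'`. If `K` has nonzero
coefficients on all edges of the system, then there is a unique gauge `(λ, μ)` with
`μ w = 1` at boundary white vertices making all coefficients on the system's edges
equal to `1`. -/
theorem unique_gauge_on_system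
    {B W : Type*} [Fintype B] [Fintype W]
    (E' : Set (B × W)) (bd : Set W)
    (F : SimpleGraph (B ⊕ W))
    (hF : ∀ x y : B ⊕ W, F.Adj x y ↔ ∃ p ∈ E',
      (x = Sum.inl p.1 ∧ y = Sum.inr p.2) ∨ (x = Sum.inr p.2 ∧ y = Sum.inl p.1))
    (hforest : F.IsAcyclic)
    (hbdry : ∀ c : F.ConnectedComponent,
      ∃! w : W, w ∈ bd ∧ F.connectedComponentMk (Sum.inr w) = c)
    (hcomp : ∀ c : F.ConnectedComponent,
      (∃! e : Sym2 (B ⊕ W), e ∈ F.edgeSet ∧ ∀ x ∈ e, F.connectedComponentMk x = c) ∨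
      (∀ b : B, F.connectedComponentMk (Sum.inl b) = c →
        (F.neighborSet (Sum.inl b)).ncard = 2))
    (K : B → W → ℂ)
    (hK : ∀ p ∈ E', K p.1 p.2 ≠ 0) :
    ∃! gauges : (B → ℂˣ) × (W → ℂˣ),
      (∀ w ∈ bd, gauges.2 w = 1) ∧
      ∀ p ∈ E', (gauges.1 p.1 : ℂ) * K p.1 p.2 * (gauges.2 p.2 : ℂ) = 1 :=
  unique_gauge_on_system_general E' bd F hF hforest hbdry K hK
end

section
/- (Claims from the proof that the origin lies in the image of the chart φ_F, Section 6.) Let T be a finite tree (a connected acyclic simple graph on a finite vertex type V), and suppose V is partitioned into two sets B and W such that every edge of T joins a vertex of B to a vertex of W, and every vertex b ∈ B has degree exactly 2 in T. Then: (a) |W| = |B| + 1; and (b) for every w₀ ∈ W there exists exactly one matching of T whose set of covered vertices is V \ {w₀}, i.e., exactly one subgraph M of T in which every vertex of V other than w₀ is incident to exactly one edge of M and w₀ is incident to none. -/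
/-!
Root the tree at `w₀ ∈ W`. A black vertex has degree two and is not the root, so besides its parent
it has exactly one child; a white vertex other than `w₀` has exactly one parent, which is black.
Hence `b ↦ child of b` is a bijection from `B` onto `W \ {w₀}`, and the edges from each `b` to its
child form a matching.

Conversely, a matching `M` avoiding `w₀` and covering `B` must match every black vertex `b` with its
child: if `b` were matched with its parent `y`, then the parent `b'` of `y`, which is closer to
`w₀`, would by induction be matched with its only child `y` as well.
-/

section Rooted

open SimpleGraph

variable {V : Type*} {G : SimpleGraph V} {r u u' v : V}

/-- `IsParent G r u v` says that `u` is a parent of `v` when `G` is rooted at `r`, i.e. `u` is a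
neighbour of `v` one step closer to `r`. As `G.dist` is `0` between different components, this
forces `u` and `v` to lie in the component of `r`. -/
structure IsParent (G : SimpleGraph V) (r u v : V) : Prop where
  adj : G.Adj u v
  dist_eq : G.dist r v = G.dist r u + 1

namespace IsParent

theorem ne_root (h : IsParent G r u v) : v ≠ r := by
  rintro rfl
  simpa using h.dist_eq

theorem reachable_right (h : IsParent G r u v) : G.Reachable r v :=
  Reachable.of_dist_ne_zero (by rw [h.dist_eq]; exact Nat.succ_ne_zero _)

theorem reachable_left (h : IsParent G r u v) : G.Reachable r u :=
  h.reachable_right.trans h.adj.symm.reachable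

theorem not_isParent_symm (h : IsParent G r u v) : ¬ IsParent G r v u := fun h' ↦ by
  have := h.dist_eq
  have := h'.dist_eq
  omega

theorem exists_isPath_penultimate_eq (h : IsParent G r u v) :
    ∃ p : G.Walk r v, p.IsPath ∧ p.penultimate = u := by
  obtain ⟨p, hp⟩ := h.reachable_left.exists_walk_length_eq_dist
  refine ⟨p.concat h.adj, Walk.isPath_of_length_eq_dist _ ?_, p.penultimate_concat h.adj⟩
  rw [Walk.length_concat, hp, h.dist_eq]

theorem eq_of_isAcyclic (hG : G.IsAcyclic) (h : IsParent G r u v) (h' : IsParent G r u' v) :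
    u = u' := by
  obtain ⟨p, hp, rfl⟩ := h.exists_isPath_penultimate_eq
  obtain ⟨q, hq, rfl⟩ := h'.exists_isPath_penultimate_eq
  have hpq : p = q := congrArg Subtype.val ((hG.subsingleton_path r v).elim ⟨p, hp⟩ ⟨q, hq⟩)
  rw [hpq]

end IsParent

theorem exists_isParent_of_reachable (hrv : G.Reachable r v) (hv : v ≠ r) :
    ∃ u, IsParent G r u v := by
  obtain ⟨p, hp⟩ := hrv.exists_walk_length_eq_dist
  have hadj : G.Adj p.penultimate v := p.adj_penultimate (Walk.not_nil_of_ne hv.symm)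
  have hlength : p.dropLast.length + 1 = p.length := by
    rw [← Walk.length_concat _ hadj, Walk.concat_dropLast]
  have hle : G.dist r p.penultimate ≤ p.dropLast.length := dist_le _
  have hdiff := hadj.diff_dist_adj (u := r)
  exact ⟨_, hadj, by omega⟩

theorem isParent_or_isParent_of_adj (hG : G.IsAcyclic) (hru : G.Reachable r u) (huv : G.Adj u v) :
    IsParent G r u v ∨ IsParent G r v u :=
  (hG.dist_eq_dist_add_one_of_adj_of_reachable r huv hru).symm.imp
    (IsParent.mk huv) (IsParent.mk huv.symm)

theorem IsParent.setOf_isParent_eq (hG : G.IsAcyclic) (h : IsParent G r u v) :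
    {c | IsParent G r v c} = G.neighborSet v \ {u} := by
  ext c
  constructor
  · intro hc
    exact ⟨hc.adj, fun hcu ↦ h.not_isParent_symm (hcu ▸ hc)⟩
  · rintro ⟨hvc, hcu⟩
    exact (isParent_or_isParent_of_adj hG h.reachable_right hvc).resolve_right
      fun hcv ↦ hcu (hcv.eq_of_isAcyclic hG h)

theorem IsParent.existsUnique_isParent (hG : G.IsAcyclic) (h : IsParent G r u v)
    (hdeg : (G.neighborSet v).ncard = 2) : ∃! c, IsParent G r v c := by
  have hcard : {c | IsParent G r v c}.ncard = 1 := by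
    have hu : u ∈ G.neighborSet v := h.adj.symm
    rw [h.setOf_isParent_eq hG, Set.ncard_sdiff_singleton_of_mem hu, hdeg]
  obtain ⟨c, hc⟩ := Set.ncard_eq_one.1 hcard
  exact ⟨c, hc.ge rfl, fun _ hc' ↦ hc.le hc'⟩

end Rooted

section Bipartite

open SimpleGraph

variable {V : Type*} {G : SimpleGraph V} {B W : Set V} {r : V}

theorem subgraph_ext_of_isBipartiteWith (hBW : G.IsBipartiteWith B W) {M M' : G.Subgraph}
    (hverts : M.verts = M'.verts) (hadj : ∀ b ∈ B, ∀ y, M.Adj b y ↔ M'.Adj b y) : M = M' := by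
  have hiff : ∀ {x y}, G.Adj x y → (M.Adj x y ↔ M'.Adj x y) := fun {x y} hxy ↦ by
    rcases hBW.mem_of_adj hxy with ⟨hx, -⟩ | ⟨-, hy⟩
    · exact hadj x hx y
    · rw [M.adj_comm, M'.adj_comm, hadj y hy x]
  ext x y
  · rw [hverts]
  · exact ⟨fun h ↦ (hiff h.adj_sub).1 h, fun h ↦ (hiff h.adj_sub).2 h⟩

theorem exists_equiv_isParent (hG : G.IsTree) (hBW : G.IsBipartiteWith B W)
    (hchild : ∀ b ∈ B, ∃! c, IsParent G r b c) :
    ∃ f : B ≃ ↥(W \ {r}), ∀ b : B, IsParent G r b (f b) := by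
  choose! f hf hf_unique using hchild
  have hmaps : ∀ b : B, f b ∈ W \ {r} := fun b ↦
    ⟨hBW.mem_of_mem_adj b.2 (hf b b.2).adj, (hf b b.2).ne_root⟩
  have hbij : Function.Bijective fun b : B ↦ (⟨f b, hmaps b⟩ : ↥(W \ {r})) := by
    constructor
    · intro b b' hbb'
      have hfbb' : f b = f b' := congrArg Subtype.val hbb'
      exact Subtype.ext ((hf b b.2).eq_of_isAcyclic hG.isAcyclic (hfbb' ▸ hf b' b'.2))
    · rintro ⟨w, hw, hwr⟩
      obtain ⟨b, hb⟩ := exists_isParent_of_reachable (hG.connected r w) hwr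
      have hbB : b ∈ B := hBW.mem_of_mem_adj' hw hb.adj
      exact ⟨⟨b, hbB⟩, Subtype.ext (hf_unique b hbB w hb).symm⟩
  exact ⟨Equiv.ofBijective _ hbij, fun b ↦ hf b b.2⟩

section Matching

variable {M : G.Subgraph}

theorem isParent_of_isMatching_adj (hG : G.IsTree) (hBW : G.IsBipartiteWith B W)
    (hchild : ∀ b ∈ B, {c | IsParent G r b c}.Subsingleton) (hM : M.IsMatching)
    (hB : B ⊆ M.verts) (hr : r ∉ M.verts) {b y : V} (hb : b ∈ B) (hby : M.Adj b y) :
    IsParent G r b y := by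
  induction hn : G.dist r b using Nat.strong_induction_on generalizing b y with
  | _ n ih =>
    refine (isParent_or_isParent_of_adj hG.isAcyclic (hG.connected r b) hby.adj_sub).resolve_right
      fun hyb ↦ ?_
    have hyr : y ≠ r := fun h ↦ hr (h ▸ hby.snd_mem)
    obtain ⟨b', hb'y⟩ := exists_isParent_of_reachable (hG.connected r y) hyr
    have hb' : b' ∈ B := hBW.mem_of_mem_adj' (hBW.mem_of_mem_adj hb hby.adj_sub) hb'y.adj
    have hlt : G.dist r b' < n := by
      have := hyb.dist_eq
      have := hb'y.dist_eq
      omega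
    obtain ⟨z, hb'z, -⟩ := hM (hB hb')
    have hzy : z = y := hchild b' hb' (ih _ hlt hb' hb'z rfl) hb'y
    have hb'b : b' = b := hM.eq_of_adj_right (hzy ▸ hb'z) hby
    exact hyb.not_isParent_symm (hb'b ▸ hb'y)

theorem isMatching_adj_iff_isParent (hG : G.IsTree) (hBW : G.IsBipartiteWith B W)
    (hchild : ∀ b ∈ B, {c | IsParent G r b c}.Subsingleton) (hM : M.IsMatching)
    (hB : B ⊆ M.verts) (hr : r ∉ M.verts) {b y : V} (hb : b ∈ B) :
    M.Adj b y ↔ IsParent G r b y := by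
  refine ⟨isParent_of_isMatching_adj hG hBW hchild hM hB hr hb, fun hby ↦ ?_⟩
  obtain ⟨z, hbz, -⟩ := hM (hB hb)
  have hzy : z = y :=
    hchild b hb (isParent_of_isMatching_adj hG hBW hchild hM hB hr hb hbz) hby
  exact hzy ▸ hbz

theorem eq_of_isMatching_of_verts_eq (hG : G.IsTree) (hBW : G.IsBipartiteWith B W)
    (hchild : ∀ b ∈ B, {c | IsParent G r b c}.Subsingleton) {M' : G.Subgraph}
    (hM : M.IsMatching) (hM' : M'.IsMatching) (hverts : M.verts = M'.verts)
    (hB : B ⊆ M.verts) (hr : r ∉ M.verts) : M = M' :=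
  subgraph_ext_of_isBipartiteWith hBW hverts fun _ hb _ ↦
    (isMatching_adj_iff_isParent hG hBW hchild hM hB hr hb).trans
      (isMatching_adj_iff_isParent hG hBW hchild hM' (hverts ▸ hB) (hverts ▸ hr) hb).symm

end Matching

theorem existsUnique_isParent_of_ncard_neighborSet_eq_two (hG : G.IsTree)
    (hdeg : ∀ b ∈ B, (G.neighborSet b).ncard = 2) (hr : r ∉ B) :
    ∀ b ∈ B, ∃! c, IsParent G r b c := fun b hb ↦ by
  obtain ⟨u, hu⟩ := exists_isParent_of_reachable (hG.connected r b) (ne_of_mem_of_not_mem hb hr)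
  exact hu.existsUnique_isParent hG.isAcyclic (hdeg b hb)

theorem existsUnique_isMatching_verts_eq (hG : G.IsTree) (hBW : G.IsBipartiteWith B W)
    (hcover : B ∪ W = Set.univ) (hr : r ∈ W) (hchild : ∀ b ∈ B, ∃! c, IsParent G r b c) :
    ∃! M : G.Subgraph, M.verts = Set.univ \ {r} ∧ M.IsMatching := by
  have hrB : r ∉ B := hBW.disjoint.notMem_of_mem_right hr
  have hverts : B ∪ W \ {r} = Set.univ \ {r} := by
    rw [← hcover, Set.union_sdiff_distrib, Set.sdiff_singleton_eq_self hrB]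
  obtain ⟨f, hf⟩ := exists_equiv_isParent hG hBW hchild
  obtain ⟨M, hM, hM'⟩ := Subgraph.IsMatching.exists_of_disjoint_sets_of_equiv
    (hBW.disjoint.mono_right Set.sdiff_subset) f fun b ↦ (hf b).adj
  rw [hverts] at hM
  refine ⟨M, ⟨hM, hM'⟩, fun N ⟨hN, hN'⟩ ↦ ?_⟩
  refine eq_of_isMatching_of_verts_eq (r := r) hG hBW
    (fun b hb _ hc _ hc' ↦ (hchild b hb).unique hc hc') hN' hM' (hN.trans hM.symm) ?_ ?_
  · rw [hN, ← hverts]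
    exact Set.subset_union_left
  · simp [hN]

theorem nonempty_right_of_isBipartiteWith [Nonempty V] (hBW : G.IsBipartiteWith B W)
    (hcover : B ∪ W = Set.univ) (hB : ∀ b ∈ B, (G.neighborSet b).Nonempty) : W.Nonempty := by
  obtain ⟨v⟩ := ‹Nonempty V›
  rcases hcover.ge (Set.mem_univ v) with hv | hv
  · obtain ⟨w, hvw⟩ := hB v hv
    exact ⟨w, hBW.mem_of_mem_adj hv hvw⟩
  · exact ⟨v, hv⟩

theorem tree_with_black_degree_two_general (hG : G.IsTree) (hBW : G.IsBipartiteWith B W)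
    (hcover : B ∪ W = Set.univ) (hdeg : ∀ b ∈ B, (G.neighborSet b).ncard = 2) :
    W.encard = B.encard + 1 ∧
      ∀ w₀ ∈ W, ∃! M : G.Subgraph, M.verts = Set.univ \ {w₀} ∧ M.IsMatching := by
  have hchild : ∀ w₀ ∈ W, ∀ b ∈ B, ∃! c, IsParent G w₀ b c := fun w₀ hw₀ ↦
    existsUnique_isParent_of_ncard_neighborSet_eq_two hG hdeg
      (hBW.disjoint.notMem_of_mem_right hw₀)
  refine ⟨?_, fun w₀ hw₀ ↦ existsUnique_isMatching_verts_eq hG hBW hcover hw₀ (hchild w₀ hw₀)⟩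
  have := hG.connected.nonempty
  obtain ⟨w₀, hw₀⟩ := nonempty_right_of_isBipartiteWith hBW hcover fun b hb ↦
    Set.nonempty_of_ncard_ne_zero (by rw [hdeg b hb]; exact two_ne_zero)
  obtain ⟨f, -⟩ := exists_equiv_isParent hG hBW (hchild w₀ hw₀)
  rw [Set.encard_congr f, Set.encard_sdiff_singleton_add_one hw₀]

end Bipartite

/-- **Claims from the proof that the origin lies in the image of the chart `φ_F`
(Section 6).** Let `T` be a finite tree whose vertices are partitioned into `B` and `W`
with every edge joining `B` to `W` and every vertex of `B` of degree exactly `2`. Then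
`|W| = |B| + 1`, and for every `w₀ ∈ W` there is exactly one matching covering
precisely the vertices other than `w₀`. -/
theorem tree_with_black_degree_two
    {V : Type*} [Fintype V] (G : SimpleGraph V) (hT : G.IsTree)
    (B W : Set V) (hcover : B ∪ W = Set.univ) (hdisj : Disjoint B W)
    (hbip : ∀ x y : V, G.Adj x y → (x ∈ B ∧ y ∈ W) ∨ (x ∈ W ∧ y ∈ B))
    (hdeg : ∀ b ∈ B, (G.neighborSet b).ncard = 2) :
    W.ncard = B.ncard + 1 ∧
      ∀ w₀ ∈ W, ∃! M : G.Subgraph, M.verts = Set.univ \ {w₀} ∧ M.IsMatching := by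
  rw [← Nat.cast_inj (R := ℕ∞), Nat.cast_succ, W.toFinite.cast_ncard_eq, B.toFinite.cast_ncard_eq]
  exact tree_with_black_degree_two_general hT ⟨hdisj, hbip⟩ hcover hdeg
end
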